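/- Let l ∈ R_1 be a strong Lefschetz element for M and let M ≅ ⊕_{α∈Λ} S_α be a decomposition of M as an S-module, S = k[l], with S_α = S(−i_α)/(l^{d_α}). Then for every subset Γ ⊆ Λ, the graded S-module ⊕_{α∈Γ} S_α has the strong Lefschetz property, with strong Lefschetz element l. -/

import Mathlib

open MvPolynomial TensorProduct

/-- `gr` is a grading making `M` a graded module over the standard graded polynomial ring
`k[x_1, …, x_n]`: `M` is the internal direct sum of the subspaces `gr i`, and homogeneous
polynomials of degree `i` map `gr j` into `gr (i + j)`. -/
def IsGrading (k : Type*) [Field k] (n : ℕ) {M : Type*} [AddCommGroup M] [Module k M]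
    [Module (MvPolynomial (Fin n) k) M] (gr : ℕ → Submodule k M) : Prop :=
  DirectSum.IsInternal gr ∧
    ∀ (i j : ℕ) (r : MvPolynomial (Fin n) k), r ∈ homogeneousSubmodule (Fin n) k i →
      ∀ x ∈ gr j, r • x ∈ gr (i + j)

/-- The scalar `z` satisfies the strong Lefschetz condition for the grading `gr`:
for all nonnegative `a` and `d`, multiplication by `z ^ a` maps `gr d` to `gr (d + a)`
injectively or surjectively. -/
def IsSLAction {k A T : Type*} [Field k] [CommRing A] [AddCommGroup T] [Module k T]
    [Module A T] (gr : ℕ → Submodule k T) (z : A) : Prop :=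
  ∀ a d : ℕ, (∀ x ∈ gr d, z ^ a • x = 0 → x = 0) ∨
    (∀ w ∈ gr (d + a), ∃ x ∈ gr d, z ^ a • x = w)

/-- The data `(iv α, dv α, e α)` exhibits a degree-zero decomposition
`T ≅ ⊕_α k[z](-(iv α))/(z^(dv α))` of the graded module `T` as a graded `k[z]`-module:
each `e α` is homogeneous of degree `iv α`, is killed by `z ^ dv α`, the elements
`z ^ j • e α` (`j < dv α`) are homogeneous of degree `iv α + j` and form a `k`-basis of `T`. -/
def IsDecomp {k A T : Type*} [Field k] [CommRing A] [AddCommGroup T] [Module k T]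
    [Module A T] (gr : ℕ → Submodule k T) (z : A) {Λ : Type*} (iv dv : Λ → ℕ)
    (e : Λ → T) : Prop :=
  (∀ α, 1 ≤ dv α) ∧ (∀ (α : Λ) (j : ℕ), j < dv α → z ^ j • e α ∈ gr (iv α + j)) ∧
    (∀ α, z ^ dv α • e α = 0) ∧
    LinearIndependent k (fun q : Σ α : Λ, Fin (dv α) => z ^ (q.2 : ℕ) • e q.1) ∧
    Submodule.span k (Set.range (fun q : Σ α : Λ, Fin (dv α) => z ^ (q.2 : ℕ) • e q.1)) = ⊤

/-- `p` is the socle degree of the graded module with grading `gr`: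
the largest degree in which the module is nonzero. -/
def IsSocleDegree {k T : Type*} [Field k] [AddCommGroup T] [Module k T]
    (gr : ℕ → Submodule k T) (p : ℕ) : Prop :=
  gr p ≠ ⊥ ∧ ∀ e : ℕ, p < e → gr e = ⊥

/-- The partial order on the cyclic summands of a decomposition:
`S_β ⪯ S_α` iff `iv α ≤ iv β` and `dv β + iv β ≤ dv α + iv α`. -/
def Prec {Λ : Type*} (iv dv : Λ → ℕ) (β α : Λ) : Prop :=
  iv α ≤ iv β ∧ dv β + iv β ≤ dv α + iv α

/-- A decomposition with data `(iv, dv)` is almost centered if whenever `S_β ⪯ S_α` one has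
`|L_{αβ} - R_{αβ}| ≤ 1`, where `L_{αβ} = iv β - iv α` and
`R_{αβ} = (dv α + iv α) - (dv β + iv β)`. -/
def AlmostCentered {Λ : Type*} (iv dv : Λ → ℕ) : Prop :=
  ∀ α β : Λ, Prec iv dv β α →
    |((iv β : ℤ) - (iv α : ℤ)) - (((dv α : ℤ) + (iv α : ℤ)) - ((dv β : ℤ) + (iv β : ℤ)))| ≤ 1

/-! The projection `P` of `M` onto `⊕_{α ∈ Γ} S_α` along the remaining summands is linear over
`k[l]` and, the basis `l ^ j • e α` being homogeneous, preserves degrees. So `l ^ a` stays injective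
after restriction to the summand, and if `w` in the summand equals `l ^ a • x`, then it also equals
`P w = l ^ a • P x`. -/

lemma span_image_fiber_eq_of_iSupIndep {R M ι κ : Type*} [Ring R] [AddCommGroup M] [Module R M]
    {v : ι → M} (hv : Submodule.span R (Set.range v) = ⊤) {gr : κ → Submodule R M}
    (hgr : iSupIndep gr) {deg : ι → κ} (hdeg : ∀ i, v i ∈ gr (deg i)) (d : κ) :
    Submodule.span R (v '' (deg ⁻¹' {d})) = gr d := by
  have hle : (fun d => Submodule.span R (v '' (deg ⁻¹' {d}))) ≤ gr := by
    refine fun d => Submodule.span_le.mpr ?_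
    rintro _ ⟨i, rfl, rfl⟩
    exact hdeg i
  have htop : ⨆ d, Submodule.span R (v '' (deg ⁻¹' {d})) = ⊤ := by
    rw [← Submodule.span_iUnion, ← Set.image_iUnion, ← Set.preimage_iUnion,
      Set.iUnion_of_singleton, Set.preimage_univ, Set.image_univ, hv]
  exact congrFun ((hgr.le_iff_eq_of_iSup_eq_top htop).mp hle) d

section BasisProj

variable {R M ι : Type*} [Semiring R] [AddCommMonoid M] [Module R M] (b : Module.Basis ι R M)

/-- The coordinate projection onto the span of the basis vectors indexed by `s`, along the span of
the remaining ones. -/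
noncomputable def basisProj (s : Set ι) : M →ₗ[R] M :=
  b.constr ℕ (s.indicator b)

lemma basisProj_apply_basis (s : Set ι) (i : ι) : basisProj b s (b i) = s.indicator b i :=
  b.constr_basis ℕ _ i

lemma basisProj_mem_span_image (s : Set ι) {t : Set ι} {x : M}
    (hx : x ∈ Submodule.span R (b '' t)) : basisProj b s x ∈ Submodule.span R (b '' t) := by
  suffices h : Submodule.span R (b '' t) ≤ (Submodule.span R (b '' t)).comap (basisProj b s) from
    h hx
  rw [Submodule.span_le]
  rintro _ ⟨i, hi, rfl⟩
  rw [SetLike.mem_coe, Submodule.mem_comap, basisProj_apply_basis]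
  by_cases his : i ∈ s
  · rw [Set.indicator_of_mem his]
    exact Submodule.subset_span ⟨i, hi, rfl⟩
  · rw [Set.indicator_of_notMem his]
    exact zero_mem _

lemma isProj_basisProj (s : Set ι) :
    LinearMap.IsProj (Submodule.span R (b '' s)) (basisProj b s) where
  map_mem x := by
    suffices h : LinearMap.range (basisProj b s) ≤ Submodule.span R (b '' s) from h ⟨x, rfl⟩
    rw [basisProj, b.constr_range, Submodule.span_le]
    rintro _ ⟨i, rfl⟩
    by_cases hi : i ∈ s
    · rw [Set.indicator_of_mem hi]
      exact Submodule.subset_span ⟨i, hi, rfl⟩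
    · rw [Set.indicator_of_notMem hi]
      exact zero_mem _
  map_id x hx := by
    refine LinearMap.eqOn_span (g := LinearMap.id) ?_ hx
    rintro _ ⟨i, hi, rfl⟩
    rw [basisProj_apply_basis, Set.indicator_of_mem hi, LinearMap.id_apply]

end BasisProj

lemma IsSLAction.inf_of_isProj {k A T : Type*} [Field k] [CommRing A] [AddCommGroup T]
    [Module k T] [Module A T] {gr : ℕ → Submodule k T} {z : A} (hSL : IsSLAction gr z)
    {N : Submodule k T} {P : T →ₗ[k] T} (hP : LinearMap.IsProj N P)
    (hPz : ∀ x, P (z • x) = z • P x) (hPgr : ∀ d, ∀ x ∈ gr d, P x ∈ gr d) :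
    IsSLAction (fun d => N ⊓ gr d) z := by
  have hPpow (a : ℕ) (x : T) : P (z ^ a • x) = z ^ a • P x := by
    induction a with
    | zero => simp only [pow_zero, one_smul]
    | succ a ih => rw [pow_succ', mul_smul, hPz, ih, mul_smul]
  intro a d
  refine (hSL a d).imp (fun hinj x hx => hinj x hx.2) fun hsurj w hw => ?_
  obtain ⟨x, hx, rfl⟩ := hsurj w hw.2
  exact ⟨P x, ⟨hP.map_mem x, hPgr d x hx⟩, by rw [← hPpow, hP.map_id _ hw.1]⟩

namespace IsDecomp

variable {k A T Λ : Type*} [Field k] [CommRing A] [AddCommGroup T] [Module k T] [Module A T]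
  {gr : ℕ → Submodule k T} {z : A} {iv dv : Λ → ℕ} {e : Λ → T}

/-- The homogeneous `k`-basis `z ^ j • e α`, `j < dv α`, given by a decomposition. -/
noncomputable def basis (hdec : IsDecomp gr z iv dv e) :
    Module.Basis (Σ α : Λ, Fin (dv α)) k T :=
  Module.Basis.mk hdec.2.2.2.1 hdec.2.2.2.2.ge

lemma basis_apply (hdec : IsDecomp gr z iv dv e) (q : Σ α : Λ, Fin (dv α)) :
    hdec.basis q = z ^ (q.2 : ℕ) • e q.1 :=
  Module.Basis.mk_apply _ _ q

lemma basis_mem_grading (hdec : IsDecomp gr z iv dv e) (q : Σ α : Λ, Fin (dv α)) :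
    hdec.basis q ∈ gr (iv q.1 + q.2) := by
  rw [basis_apply]
  exact hdec.2.1 q.1 q.2 q.2.isLt

lemma pow_smul_eq_zero (hdec : IsDecomp gr z iv dv e) {α : Λ} {j : ℕ} (hj : dv α ≤ j) :
    z ^ j • e α = 0 := by
  rw [← Nat.sub_add_cancel hj, pow_add, mul_smul, hdec.2.2.1, smul_zero]

/-- The projection of `T` onto the sum of the cyclic summands indexed by `Γ`, along the sum of the
remaining ones. -/
noncomputable def proj (hdec : IsDecomp gr z iv dv e) (Γ : Set Λ) : T →ₗ[k] T :=
  basisProj hdec.basis (Sigma.fst ⁻¹' Γ)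

lemma isProj_proj (hdec : IsDecomp gr z iv dv e) (Γ : Set Λ) :
    LinearMap.IsProj
      (Submodule.span k {t : T | ∃ α ∈ Γ, ∃ j : ℕ, j < dv α ∧ t = z ^ j • e α})
      (hdec.proj Γ) := by
  have himage : {t : T | ∃ α ∈ Γ, ∃ j : ℕ, j < dv α ∧ t = z ^ j • e α} =
      hdec.basis '' (Sigma.fst ⁻¹' Γ) := by
    ext t
    constructor
    · rintro ⟨α, hα, j, hj, rfl⟩
      exact ⟨⟨α, j, hj⟩, hα, hdec.basis_apply _⟩
    · rintro ⟨q, hq, rfl⟩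
      exact ⟨q.1, hq, q.2, q.2.isLt, hdec.basis_apply q⟩
  rw [himage]
  exact isProj_basisProj _ _

lemma proj_mem_grading (hdec : IsDecomp gr z iv dv e) (hgr : iSupIndep gr) (Γ : Set Λ)
    {d : ℕ} {x : T} (hx : x ∈ gr d) : hdec.proj Γ x ∈ gr d := by
  rw [← span_image_fiber_eq_of_iSupIndep hdec.basis.span_eq hgr hdec.basis_mem_grading d] at hx ⊢
  exact basisProj_mem_span_image _ _ hx

lemma proj_pow_smul (hdec : IsDecomp gr z iv dv e) (Γ : Set Λ) (α : Λ) (j : ℕ) :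
    hdec.proj Γ (z ^ j • e α) = Γ.indicator (fun β => z ^ j • e β) α := by
  classical
  obtain hj | hj := lt_or_ge j (dv α)
  · have hbasis : z ^ j • e α = hdec.basis ⟨α, j, hj⟩ := (hdec.basis_apply ⟨α, j, hj⟩).symm
    rw [hbasis, proj, basisProj_apply_basis]
    simp only [Set.indicator_apply, Set.mem_preimage, basis_apply]
  · simp only [Set.indicator_apply, hdec.pow_smul_eq_zero hj, map_zero, ite_self]

lemma proj_smul [SMulCommClass A k T] (hdec : IsDecomp gr z iv dv e) (Γ : Set Λ) (x : T) :
    hdec.proj Γ (z • x) = z • hdec.proj Γ x := by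
  suffices h : hdec.proj Γ ∘ₗ DistribSMul.toLinearMap k T z =
      DistribSMul.toLinearMap k T z ∘ₗ hdec.proj Γ from LinearMap.congr_fun h x
  refine hdec.basis.ext fun q => ?_
  simp only [LinearMap.comp_apply, DistribSMul.toLinearMap_apply, basis_apply]
  rw [← mul_smul, ← pow_succ', proj_pow_smul, proj_pow_smul, ← Set.indicator_const_smul_apply]
  simp only [pow_succ', mul_smul]

end IsDecomp

theorem statement2_general {k A T Λ : Type*} [Field k] [CommRing A] [AddCommGroup T] [Module k T]
    [Module A T] [SMulCommClass A k T] {gr : ℕ → Submodule k T} (hgr : iSupIndep gr) {z : A}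
    (hSL : IsSLAction gr z) {iv dv : Λ → ℕ} {e : Λ → T} (hdec : IsDecomp gr z iv dv e)
    (Γ : Set Λ) :
    IsSLAction (fun d =>
      Submodule.span k {t : T | ∃ α ∈ Γ, ∃ j : ℕ, j < dv α ∧ t = z ^ j • e α} ⊓ gr d) z :=
  hSL.inf_of_isProj (hdec.isProj_proj Γ) (hdec.proj_smul Γ) fun _ _ => hdec.proj_mem_grading hgr Γ

/-- Let `l ∈ R_1` be a strong Lefschetz element for `M` and let
`M ≅ ⊕_{α ∈ Λ} S_α` be a decomposition of `M` as a graded `S = k[l]`-module, with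
`S_α = S(-i_α)/(l^{d_α})`.  Then for every subset `Γ ⊆ Λ`, the graded `S`-module
`⊕_{α ∈ Γ} S_α` (realized inside `M` as the span of the elements `l^j • e_α`, `α ∈ Γ`,
`j < d_α`, with the induced grading) has the strong Lefschetz property with strong Lefschetz
element `l`. -/
theorem statement2 {k : Type} [Field k] [CharZero k] {n : ℕ} {M : Type} [AddCommGroup M]
    [Module k M] [Module (MvPolynomial (Fin n) k) M]
    [IsScalarTower k (MvPolynomial (Fin n) k) M]
    [Module.Finite (MvPolynomial (Fin n) k) M] [FiniteDimensional k M]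
    (gr : ℕ → Submodule k M) (hgr : IsGrading k n gr)
    (l : MvPolynomial (Fin n) k) (hl : l ∈ homogeneousSubmodule (Fin n) k 1)
    (hSL : IsSLAction gr l)
    {Λ : Type} [Fintype Λ] (iv dv : Λ → ℕ) (e : Λ → M)
    (hdec : IsDecomp gr l iv dv e) :
    ∀ Γ : Set Λ,
      IsSLAction (fun dd =>
        (Submodule.span k {t : M | ∃ α ∈ Γ, ∃ j : ℕ, j < dv α ∧ t = l ^ j • e α}) ⊓ gr dd)
        l :=
  statement2_general hgr.1.submodule_iSupIndep hSL hdec
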